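/- arXiv:0806.3874 — 2 statements merged into one kernel-verified Lean document; each statement's English description precedes it below -/
import Mathlib

section
/- Let L* be a generic element of K_{t,⪰}, let 1 ≤ s ≤ ⌊t/2⌋, and let G_t = H_t ∪ W_t. Assume dim π_{2s}(G_t^⊥) = dim π_{s−1}(G_t^⊥) and dim π_{2s}(G_t^⊥) = dim π_{2s}((G_t^+)^⊥). Then the ideal J generated by Ker M_s(L*) is real radical (J = √[ℝ]J) and is contained in the vanishing ideal of V_ℝ(I) (every polynomial in J vanishes at every common real zero of h₁,…,h_m). Moreover, if s ≥ D, where D = max_j deg(h_j), then J = √[ℝ]I. -/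
open MvPolynomial

noncomputable section

/-- The polynomial ring `ℝ[x₁,…,xₙ]`. -/
abbrev MP (n : ℕ) := MvPolynomial (Fin n) ℝ

/-- The total degree `|α|` of a monomial exponent `α`. -/
def mdeg {n : ℕ} (α : Fin n →₀ ℕ) : ℕ := α.sum fun _ e => e

/-- The subspace `ℝ[x]_t` of polynomials of total degree at most `t`. -/
abbrev RxT (n t : ℕ) : Submodule ℝ (MP n) := restrictTotalDegree (Fin n) ℝ t

/-- The kernel of the moment matrix `M_s(L)`: polynomials `p` of degree at most `s` such that
`L(p·x^β) = 0` for all monomials `x^β` of degree at most `s`. -/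
def momKer {n : ℕ} (L : Module.Dual ℝ (MP n)) (s : ℕ) : Set (MP n) :=
  {p | p.totalDegree ≤ s ∧ ∀ β : Fin n →₀ ℕ, mdeg β ≤ s → L (p * monomial β 1) = 0}

/-- Positive semidefiniteness of the moment matrix `M_t(L)`: `L(p²) ≥ 0` for all `p ∈ ℝ[x]_t`. -/
def momPSD {n : ℕ} (L : Module.Dual ℝ (MP n)) (t : ℕ) : Prop :=
  ∀ p : MP n, p.totalDegree ≤ t → 0 ≤ L (p * p)

/-- The bilinear/moment form of order `s` associated to `L`, as a map `ℝ[x]_s → (ℝ[x]_s)*`;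
its matrix in the monomial basis is the moment matrix `M_s(L)`. -/
def momBil {n : ℕ} (L : Module.Dual ℝ (MP n)) (s : ℕ) :
    RxT n s →ₗ[ℝ] Module.Dual ℝ (RxT n s) :=
  LinearMap.mk₂ ℝ (fun p q => L ((p : MP n) * (q : MP n)))
    (fun p p' q => by simp [add_mul])
    (fun c p q => by simp [smul_mul_assoc])
    (fun p q q' => by simp [mul_add])
    (fun c p q => by simp [mul_smul_comm])

/-- The rank of the moment matrix `M_s(L)`. -/
def momRank {n : ℕ} (L : Module.Dual ℝ (MP n)) (s : ℕ) : ℕ :=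
  Module.finrank ℝ (LinearMap.range (momBil L s))

/-- The column of the moment matrix `M_s(L)` indexed by the monomial `β`. -/
def momCol {n : ℕ} (L : Module.Dual ℝ (MP n)) (s : ℕ) (β : Fin n →₀ ℕ) :
    {α : Fin n →₀ ℕ // mdeg α ≤ s} → ℝ :=
  fun α => L (monomial (α.1 + β) 1)

/-- `G^⊥`: linear functionals vanishing on the set `G`. -/
def annih {n : ℕ} (G : Set (MP n)) : Submodule ℝ (Module.Dual ℝ (MP n)) :=
  (Submodule.span ℝ G).dualAnnihilator

/-- The projection `π_s` sending a linear functional to its restriction to `ℝ[x]_s`. -/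
def projDual (n s : ℕ) : Module.Dual ℝ (MP n) →ₗ[ℝ] Module.Dual ℝ (RxT n s) :=
  (RxT n s).subtype.dualMap

/-- `dim π_s(G^⊥)`. -/
def dimProj {n : ℕ} (s : ℕ) (G : Set (MP n)) : ℕ :=
  Module.finrank ℝ (Submodule.map (projDual n s) (annih G))

/-- The one-degree prolongation `S⁺ = S ∪ x₁S ∪ … ∪ xₙS` of a set of polynomials. -/
def plusOp {n : ℕ} (G : Set (MP n)) : Set (MP n) :=
  G ∪ ⋃ i : Fin n, (fun p => X i * p) '' G

/-- The set `H_t = {x^α h_j : |α| + deg h_j ≤ t}` of prolongations of the generators. -/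
def Hset {n m : ℕ} (h : Fin m → MP n) (t : ℕ) : Set (MP n) :=
  {p | ∃ (α : Fin n →₀ ℕ) (j : Fin m), mdeg α + (h j).totalDegree ≤ t ∧ p = monomial α 1 * h j}

/-- The cone `K_{t,⪰}` of linear functionals vanishing on `H_t` with `M_{⌊t/2⌋}(L) ⪰ 0`. -/
def Kpos {n m : ℕ} (h : Fin m → MP n) (t : ℕ) : Set (Module.Dual ℝ (MP n)) :=
  {L | (∀ g ∈ Hset h t, L g = 0) ∧ momPSD L (t / 2)}

/-- `L*` is generic in `K_{t,⪰}`: it belongs to `K_{t,⪰}` and its moment matrix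
`M_{⌊t/2⌋}(L*)` has maximum rank over `K_{t,⪰}`. -/
def Generic {n m : ℕ} (h : Fin m → MP n) (t : ℕ) (Ls : Module.Dual ℝ (MP n)) : Prop :=
  Ls ∈ Kpos h t ∧ ∀ L ∈ Kpos h t, momRank L (t / 2) ≤ momRank Ls (t / 2)

/-- `W_t = {x^α g : |α| ≤ ⌊t/2⌋, g ∈ N_t}`, with `N_t = Ker M_{⌊t/2⌋}(L*)` for `L*` generic. -/
def Wset {n m : ℕ} (h : Fin m → MP n) (t : ℕ) (Ls : Module.Dual ℝ (MP n)) : Set (MP n) :=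
  {p | ∃ (α : Fin n →₀ ℕ) (g : MP n), mdeg α ≤ t / 2 ∧ g ∈ momKer Ls (t / 2) ∧
    p = monomial α 1 * g}

/-- The real radical `√[ℝ]I` of an ideal `I`. -/
def realRad {n : ℕ} (I : Ideal (MP n)) : Set (MP n) :=
  {p | ∃ m : ℕ, 0 < m ∧ ∃ (k : ℕ) (q : Fin k → MP n), p ^ (2 * m) + ∑ j, q j ^ 2 ∈ I}

/-- A set of monomials closed under taking divisions. -/
def DivClosed {n : ℕ} (B : Set (Fin n →₀ ℕ)) : Prop :=
  ∀ a ∈ B, ∀ a' : Fin n →₀ ℕ, a' ≤ a → a' ∈ B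

/-- A set of monomials connected to 1: each `m ∈ B` is a product `m = m₁⋯m_k` with `m₁ = 1`
and all partial products `m₁⋯m_h ∈ B` (written additively on exponents). -/
def ConnectedToOne {n : ℕ} (B : Set (Fin n →₀ ℕ)) : Prop :=
  ∀ a ∈ B, ∃ (k : ℕ) (c : Fin (k + 1) → (Fin n →₀ ℕ)),
    c 0 = 0 ∧ (∀ j : Fin (k + 1), (∑ i ∈ Finset.univ.filter (· ≤ j), c i) ∈ B) ∧
    (∑ i, c i) = a

/-- `Span_ℝ(B)` for a set `B` of monomials. -/
def spanMon {n : ℕ} (B : Set (Fin n →₀ ℕ)) : Submodule ℝ (MP n) :=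
  Submodule.span ℝ ((fun a => (monomial a 1 : MP n)) '' B)

/-- The border `∂B = B⁺ \ B` of a set of monomials. -/
def borderSet {n : ℕ} (B : Set (Fin n →₀ ℕ)) : Set (Fin n →₀ ℕ) :=
  {a | a ∉ B ∧ ∃ i : Fin n, ∃ b ∈ B, a = b + Finsupp.single i 1}

end

/-!
Let `V` be the span of `G_t`. The dimension hypotheses say that every polynomial of degree at most
`2s` reduces modulo `V` to degree at most `s - 1`, and that `V` absorbs multiplication by variables
as long as the degree stays at most `2s`. By Mourrain's normal form criterion, the ideal generated
by the elements of `V` of degree at most `2s` then contains no further polynomials of degree at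
most `2s`. Hence the restriction of `L*` to `ℝ[x]_{2s}` extends to a functional `Λ` on `ℝ[x]`
vanishing on this ideal. Every polynomial reduces modulo the ideal to degree at most `s - 1`, so `Λ`
is nonnegative on squares and its moment kernel is generated by `Ker M_s(L*)`. Moment kernels of
such functionals are real ideals.

Conversely, let `U` be a real ideal containing the `h_j`. Since sums of squares in `ℝ[x]/U` vanish
only trivially, convex separation gives a functional that is positive on nonzero squares from a
given finite-dimensional subspace of `ℝ[x]/U`. It pulls back to an element of `K_{t,⪰}` whose moment
kernel lies in `U`, and generic kernels are minimal, so `Ker M_s(L*) ⊆ U`. The cases needed are the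
ideal of a real zero and the real radical of `I`.
-/

/-! ### Real ideals and the real radical -/

section RealIdeal

variable {R S : Type*} [CommRing R] [CommRing S]

/-- A real ideal: whenever a sum of squares lies in `I`, so does each of the squared elements.
One element is singled out and the remaining squares are collected in `σ`. -/
def IsRealIdeal (I : Ideal R) : Prop :=
  ∀ a σ : R, IsSumSq σ → a ^ 2 + σ ∈ I → a ∈ I

theorem IsRealIdeal.isRadical {I : Ideal R} (hI : IsRealIdeal I) : I.IsRadical :=
  (Ideal.isRadical_iff_pow_one_lt 2 one_lt_two).mpr fun a ha =>
    hI a 0 IsSumSq.zero (by rwa [add_zero])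

theorem isSumSq_map (f : R →+* S) {σ : R} (hσ : IsSumSq σ) : IsSumSq (f σ) := by
  induction hσ with
  | zero => rw [map_zero]; exact IsSumSq.zero
  | sq_add a _ ih => rw [map_add, map_mul]; exact IsSumSq.sq_add _ ih

theorem isRealIdeal_ker [IsFormallyReal S] (f : R →+* S) : IsRealIdeal (RingHom.ker f) := by
  intro a σ hσ h
  rw [RingHom.mem_ker, map_add, map_pow] at h
  exact eq_zero_of_pow_eq_zero
    (IsFormallyReal.eq_zero_of_add_right (IsSquare.sq _).isSumSq (isSumSq_map f hσ) h)

theorem exists_isSumSq_map_eq {f : R →+* S} (hf : Function.Surjective f) {σ : S}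
    (hσ : IsSumSq σ) : ∃ τ, IsSumSq τ ∧ f τ = σ := by
  induction hσ with
  | zero => exact ⟨0, IsSumSq.zero, map_zero f⟩
  | sq_add b _ ih =>
    obtain ⟨τ, hτ, rfl⟩ := ih
    obtain ⟨c, rfl⟩ := hf b
    exact ⟨c * c + τ, IsSumSq.sq_add c hτ, by rw [map_add, map_mul]⟩

theorem IsRealIdeal.isFormallyReal_quotient {I : Ideal R} (hI : IsRealIdeal I) :
    IsFormallyReal (R ⧸ I) := by
  refine .of_eq_zero_of_eq_zero_of_mul_self_add fun {σ b} hσ h => ?_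
  obtain ⟨τ, hτ, rfl⟩ := exists_isSumSq_map_eq Ideal.Quotient.mk_surjective hσ
  obtain ⟨a, rfl⟩ := Ideal.Quotient.mk_surjective b
  rw [← map_mul, ← map_add, Ideal.Quotient.eq_zero_iff_mem, ← sq] at h
  exact Ideal.Quotient.eq_zero_iff_mem.mpr (hI a τ hτ h)

theorem eq_zero_of_sum_sq_eq_zero [IsFormallyReal R] {ι : Type*} {s : Finset ι} {a : ι → R}
    (h : ∑ i ∈ s, a i ^ 2 = 0) {i : ι} (hi : i ∈ s) : a i = 0 := by
  classical
  rw [← Finset.add_sum_erase s (fun j => a j ^ 2) hi] at h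
  exact eq_zero_of_pow_eq_zero (IsFormallyReal.eq_zero_of_add_right
    (IsSquare.sq _).isSumSq (IsSumSq.sum_sq (s.erase i) a) h)

theorem exists_add_pow_eq_pow_add {A : Type*} [CommSemiring A] (f g : A) (k : ℕ) :
    ∃ r, (f + g) ^ k = f ^ k + r := by
  induction k with
  | zero => exact ⟨0, by simp only [pow_zero, add_zero]⟩
  | succ k ih =>
    obtain ⟨r, hr⟩ := ih
    exact ⟨f ^ k * g + r * (f + g), by rw [pow_succ, hr]; ring⟩

/-- The sums of squares `f` with `-f ∈ Σ + I`, as an ideal of the semiring `Σ` of sums of squares.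
Its radical in that semiring computes the real radical of `I`. -/
def sumSqIdeal (I : Ideal R) : Ideal (Subsemiring.sumSq R) where
  carrier := {f | ∃ σ, IsSumSq σ ∧ (f : R) + σ ∈ I}
  zero_mem' := ⟨0, IsSumSq.zero, by simp only [ZeroMemClass.coe_zero, add_zero, zero_mem]⟩
  add_mem' := by
    rintro f g ⟨σ, hσ, hf⟩ ⟨τ, hτ, hg⟩
    refine ⟨σ + τ, hσ.add hτ, ?_⟩
    rw [Subsemiring.coe_add, add_add_add_comm]
    exact I.add_mem hf hg
  smul_mem' := by
    rintro c f ⟨σ, hσ, hf⟩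
    refine ⟨c * σ, IsSumSq.mul (Subsemiring.mem_sumSq.mp c.2) hσ, ?_⟩
    rw [smul_eq_mul, Subsemiring.coe_mul, ← mul_add]
    exact I.mul_mem_left _ hf

theorem mem_radical_sumSqIdeal_of_add {I : Ideal R} {f g : Subsemiring.sumSq R}
    (h : f + g ∈ (sumSqIdeal I).radical) : f ∈ (sumSqIdeal I).radical := by
  obtain ⟨k, σ, hσ, hk⟩ := h
  obtain ⟨r, hr⟩ := exists_add_pow_eq_pow_add f g k
  refine ⟨k, r + σ, (Subsemiring.mem_sumSq.mp r.2).add hσ, ?_⟩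
  rwa [hr, Subsemiring.coe_add, add_assoc] at hk

/-- The square of `a`, as an element of the semiring of sums of squares. -/
def sumSqOfSq (a : R) : Subsemiring.sumSq R :=
  ⟨a ^ 2, Subsemiring.mem_sumSq.mpr (sq a ▸ IsSumSq.mul_self a)⟩

/-- The real radical of `I`: the elements `p` such that `p ^ (2 * k) + σ ∈ I` for some exponent `k`
and some sum of squares `σ`. Allowing `k = 0` changes nothing: `1 + σ ∈ I` implies
`p ^ 2 + p ^ 2 * σ ∈ I`. -/
def realRadical (I : Ideal R) : Ideal R where
  carrier := {p | sumSqOfSq p ∈ (sumSqIdeal I).radical}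
  zero_mem' := by
    have : sumSqOfSq (0 : R) = 0 := Subtype.ext (zero_pow two_ne_zero)
    rw [Set.mem_ofPred_eq, this]
    exact zero_mem _
  add_mem' := by
    intro p q hp hq
    have parallelogram : sumSqOfSq (p + q) + sumSqOfSq (p - q) =
        (sumSqOfSq p + sumSqOfSq q) + (sumSqOfSq p + sumSqOfSq q) := Subtype.ext (by
      simp only [sumSqOfSq, Subsemiring.coe_add]
      ring)
    apply mem_radical_sumSqIdeal_of_add (g := sumSqOfSq (p - q))
    rw [parallelogram]
    exact add_mem (add_mem hp hq) (add_mem hp hq)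
  smul_mem' := by
    intro c p hp
    have : sumSqOfSq (c * p) = sumSqOfSq c * sumSqOfSq p := Subtype.ext (mul_pow c p 2)
    rw [Set.mem_ofPred_eq, smul_eq_mul, this]
    exact Ideal.mul_mem_left _ _ hp

theorem mem_realRadical {I : Ideal R} {p : R} :
    p ∈ realRadical I ↔ ∃ k σ, IsSumSq σ ∧ p ^ (2 * k) + σ ∈ I := by
  simp only [pow_mul]
  rfl

theorem le_realRadical (I : Ideal R) : I ≤ realRadical I := fun p hp =>
  mem_realRadical.mpr ⟨1, 0, IsSumSq.zero, by
    rw [add_zero, mul_one]; exact I.pow_mem_of_mem hp 2 two_pos⟩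

theorem isRealIdeal_realRadical (I : Ideal R) : IsRealIdeal (realRadical I) := by
  intro a σ hσ h
  have hsq : (sumSqOfSq a + ⟨σ, Subsemiring.mem_sumSq.mpr hσ⟩) ^ 2 ∈ (sumSqIdeal I).radical := h
  exact mem_radical_sumSqIdeal_of_add (Ideal.mem_radical_of_pow_mem hsq)

theorem IsRealIdeal.realRadical_le {I J : Ideal R} (hJ : IsRealIdeal J) (hIJ : I ≤ J) :
    realRadical I ≤ J := by
  intro p hp
  obtain ⟨k, σ, hσ, h⟩ := mem_realRadical.mp hp
  rw [mul_comm, pow_mul] at h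
  exact hJ.isRadical ⟨k, hJ (p ^ k) σ hσ (hIJ h)⟩

theorem IsRealIdeal.realRadical_eq {I : Ideal R} (hI : IsRealIdeal I) : realRadical I = I :=
  le_antisymm (hI.realRadical_le le_rfl) (le_realRadical I)

theorem exists_eq_sum_sq_of_isSumSq {σ : R} (hσ : IsSumSq σ) :
    ∃ (k : ℕ) (q : Fin k → R), σ = ∑ j, q j ^ 2 := by
  induction hσ with
  | zero => exact ⟨0, 0, rfl⟩
  | sq_add a _ ih =>
    obtain ⟨k, q, rfl⟩ := ih
    exact ⟨k + 1, Fin.cons a q, by simp [Fin.sum_univ_succ, sq]⟩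

end RealIdeal

theorem coe_realRadical {n : ℕ} (I : Ideal (MP n)) : (realRadical I : Set (MP n)) = realRad I := by
  ext p
  rw [SetLike.mem_coe]
  constructor
  · intro hp
    obtain ⟨k, σ, hσ, h⟩ := mem_realRadical.mp hp
    obtain ⟨l, q, hq⟩ := exists_eq_sum_sq_of_isSumSq ((IsSumSq.mul_self p).mul hσ)
    refine ⟨k + 1, k.succ_pos, l, q, ?_⟩
    rw [← hq, show p ^ (2 * (k + 1)) + p * p * σ = p * p * (p ^ (2 * k) + σ) by ring]
    exact I.mul_mem_left _ h
  · rintro ⟨m, -, k, q, h⟩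
    exact mem_realRadical.mpr ⟨m, _, IsSumSq.sum_sq _ q, h⟩

/-! ### Strictly positive functionals -/

theorem isCompact_convexHull {E : Type*} [AddCommGroup E] [Module ℝ E] [FiniteDimensional ℝ E]
    [TopologicalSpace E] [ContinuousAdd E] [ContinuousSMul ℝ E] {K : Set E} (hK : IsCompact K) :
    IsCompact (convexHull ℝ K) := by
  -- Carathéodory: convex combinations of at most `dim E + 1` points suffice.
  let combination (k : ℕ) : (Fin k → ℝ) × (Fin k → E) → E := fun wz => ∑ i, wz.1 i • wz.2 i
  let combinations (k : ℕ) : Set E :=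
    combination k '' (stdSimplex ℝ (Fin k) ×ˢ Set.univ.pi fun _ => K)
  have hcompact : IsCompact (⋃ k ∈ Set.Iic (Module.finrank ℝ E + 1), combinations k) :=
    (Set.finite_Iic _).isCompact_biUnion fun k _ =>
      ((isCompact_stdSimplex (𝕜 := ℝ) (Fin k)).prod (isCompact_univ_pi fun _ => hK)).image
        (by fun_prop)
  convert hcompact
  apply Set.Subset.antisymm
  · intro x hx
    obtain ⟨ι, _, z, w, hzK, hz, hw, hw1, rfl⟩ := eq_pos_convex_span_of_mem_convexHull hx
    let e := (Fintype.equivFin ι).symm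
    refine Set.mem_biUnion (x := Fintype.card ι) ?_ ⟨(w ∘ e, z ∘ e), ⟨⟨?_, ?_⟩, ?_⟩, ?_⟩
    · exact hz.card_le_finrank_succ.trans (Nat.succ_le_succ (Submodule.finrank_le _))
    · exact fun i => (hw (e i)).le
    · rwa [← e.sum_comp] at hw1
    · exact fun i _ => hzK ⟨e i, rfl⟩
    · exact e.sum_comp fun i => w i • z i
  · refine Set.iUnion₂_subset fun k _ => ?_
    rintro _ ⟨⟨w, z⟩, ⟨⟨hw, hw1⟩, hz⟩, rfl⟩
    exact mem_convexHull_of_exists_fintype w z hw hw1 (fun i => hz i trivial) rfl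

theorem exists_linearMap_diag_pos_of_normed {V E : Type*}
    [NormedAddCommGroup V] [NormedSpace ℝ V] [FiniteDimensional ℝ V]
    [NormedAddCommGroup E] [NormedSpace ℝ E] [FiniteDimensional ℝ E] (B : V →ₗ[ℝ] V →ₗ[ℝ] E)
    (hB : ∀ (ι : Type) [Fintype ι] (v : ι → V), ∑ i, B (v i) (v i) = 0 → ∀ i, v i = 0) :
    ∃ f : E →ₗ[ℝ] ℝ, ∀ v ≠ 0, 0 < f (B v v) := by
  let K : Set E := (fun v => B v v) '' Metric.sphere (0 : V) 1
  have hcont : Continuous fun v => B v v :=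
    (LinearMap.toContinuousBilinearMap B).continuous₂.comp (continuous_id.prodMk continuous_id)
  have hK : IsCompact K := (isCompact_sphere 0 1).image hcont
  have hzero : (0 : E) ∉ convexHull ℝ K := by
    intro h
    obtain ⟨ι, _, w, z, hw, hw1, hzK, hsum⟩ := mem_convexHull_iff_exists_fintype.mp h
    choose v hv hvz using hzK
    have hw0 (i : ι) : w i = 0 := by
      have hscaled : √(w i) • v i = 0 := by
        refine hB ι (fun i => √(w i) • v i) ?_ i
        simp only [map_smul, LinearMap.smul_apply, smul_smul, Real.mul_self_sqrt (hw _)]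
        simpa only [← hvz] using hsum
      have hvi : v i ≠ 0 := ne_zero_of_mem_unit_sphere ⟨v i, hv i⟩
      exact (Real.sqrt_eq_zero (hw i)).mp ((smul_eq_zero.mp hscaled).resolve_right hvi)
    simp only [hw0, Finset.sum_const_zero, zero_ne_one] at hw1
  obtain ⟨f, u, hu, hf⟩ := geometric_hahn_banach_point_closed (convex_convexHull ℝ K)
    (isCompact_convexHull hK).isClosed hzero
  rw [map_zero] at hu
  refine ⟨f, fun v hv => ?_⟩
  have hunit : 0 < f (B (‖v‖⁻¹ • v) (‖v‖⁻¹ • v)) :=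
    hu.trans (hf _ (subset_convexHull ℝ K ⟨_, by
      rw [mem_sphere_zero_iff_norm, norm_smul, norm_inv, norm_norm,
        inv_mul_cancel₀ (norm_ne_zero_iff.mpr hv)], rfl⟩))
  simp only [map_smul, LinearMap.smul_apply, smul_eq_mul] at hunit
  have hinv : 0 < ‖v‖⁻¹ := inv_pos.mpr (norm_pos_iff.mpr hv)
  exact pos_of_mul_pos_right (pos_of_mul_pos_right hunit hinv.le) hinv.le

theorem exists_linearMap_diag_pos {V E : Type*} [AddCommGroup V] [Module ℝ V]
    [FiniteDimensional ℝ V] [AddCommGroup E] [Module ℝ E] (B : V →ₗ[ℝ] V →ₗ[ℝ] E)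
    (hB : ∀ (ι : Type) [Fintype ι] (v : ι → V), ∑ i, B (v i) (v i) = 0 → ∀ i, v i = 0) :
    ∃ f : E →ₗ[ℝ] ℝ, ∀ v ≠ 0, 0 < f (B v v) := by
  -- `E` need be neither normed nor finite dimensional: pass to coordinates on the span of `B`.
  let U : Submodule ℝ E := Submodule.map₂ B ⊤ ⊤
  have hU (v w : V) : B v w ∈ U := Submodule.apply_mem_map₂ B trivial trivial
  have : FiniteDimensional ℝ U := .of_fg (Module.Finite.fg_top.map₂ B Module.Finite.fg_top)
  obtain ⟨π, hπ⟩ := U.subtype.exists_leftInverse_of_injective U.ker_subtype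
  have hπU {x : E} (hx : x ∈ U) (h : π x = 0) : x = 0 :=
    (U.mk_eq_zero hx).mp ((LinearMap.congr_fun hπ ⟨x, hx⟩).symm.trans h)
  let a := (Module.finBasis ℝ V).equivFun
  let b := (Module.finBasis ℝ U).equivFun
  let B' := (B.compl₁₂ a.symm.toLinearMap a.symm.toLinearMap).compr₂ (b.toLinearMap ∘ₗ π)
  have hB' : ∀ (ι : Type) [Fintype ι] (x : ι → _), ∑ i, B' (x i) (x i) = 0 → ∀ i, x i = 0 := by
    intro ι _ x hx i
    rw [← a.symm.map_eq_zero_iff]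
    refine hB ι (fun i => a.symm (x i)) (hπU (sum_mem fun i _ => hU _ _) ?_) i
    rw [← b.map_eq_zero_iff, map_sum, map_sum]
    exact hx
  obtain ⟨f, hf⟩ := exists_linearMap_diag_pos_of_normed B' hB'
  refine ⟨f ∘ₗ b.toLinearMap ∘ₗ π, fun v hv => ?_⟩
  simpa only [B', LinearMap.compr₂_apply, LinearMap.compl₁₂_apply, LinearMap.comp_apply,
    LinearEquiv.coe_coe, LinearEquiv.symm_apply_apply] using hf (a v) (a.map_eq_zero_iff.not.mpr hv)

theorem exists_linearMap_mul_self_pos {Q : Type*} [CommRing Q] [IsFormallyReal Q] [Algebra ℝ Q]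
    (W : Submodule ℝ Q) [FiniteDimensional ℝ W] :
    ∃ L : Q →ₗ[ℝ] ℝ, ∀ w ∈ W, w ≠ 0 → 0 < L (w * w) := by
  obtain ⟨L, hL⟩ := exists_linearMap_diag_pos ((LinearMap.mul ℝ Q).domRestrict₁₂ W W) (by
    intro ι _ v hv i
    rw [← W.coe_eq_zero]
    refine eq_zero_of_sum_sq_eq_zero (a := fun i => (v i : Q)) ?_ (Finset.mem_univ i)
    simpa only [sq, LinearMap.domRestrict₁₂_apply, LinearMap.mul_apply'] using hv)
  exact ⟨L, fun w hw hw0 => hL ⟨w, hw⟩ (mt (W.mk_eq_zero hw).mp hw0)⟩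

/-! ### Kernels of moment matrices -/

section MomentKernel

variable {n m s d t : ℕ} {L L' : Module.Dual ℝ (MP n)} {h : Fin m → MP n}

theorem totalDegree_monomial_one (α : Fin n →₀ ℕ) :
    (monomial α 1 : MP n).totalDegree = mdeg α :=
  totalDegree_monomial α one_ne_zero

theorem mem_momKer_iff {p : MP n} :
    p ∈ momKer L s ↔ p.totalDegree ≤ s ∧ ∀ q : MP n, q.totalDegree ≤ s → L (p * q) = 0 := by
  refine and_congr_right fun _ => ⟨fun hp q hq => ?_, fun hp β hβ => hp _ ?_⟩
  · rw [q.as_sum, Finset.mul_sum, map_sum]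
    refine Finset.sum_eq_zero fun β hβ => ?_
    have hmonomial : monomial β (coeff β q) = coeff β q • (monomial β 1 : MP n) := by
      rw [smul_monomial, smul_eq_mul, mul_one]
    rw [hmonomial, mul_smul_comm, map_smul, hp β ((le_totalDegree hβ).trans hq), smul_zero]
  · rwa [totalDegree_monomial_one]

theorem mem_ker_momBil {p : RxT n d} :
    p ∈ LinearMap.ker (momBil L d) ↔ (p : MP n) ∈ momKer L d := by
  rw [mem_momKer_iff, LinearMap.mem_ker, LinearMap.ext_iff]
  exact ⟨fun hp => ⟨(mem_restrictTotalDegree _ _ _).mp p.2, fun q hq =>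
      hp ⟨q, (mem_restrictTotalDegree _ _ _).mpr hq⟩⟩,
    fun hp q => hp.2 q ((mem_restrictTotalDegree _ _ _).mp q.2)⟩

theorem mem_momKer_iff_apply_mul_self (hL : momPSD L d) {p : MP n} (hp : p.totalDegree ≤ d) :
    p ∈ momKer L d ↔ L (p * p) = 0 := by
  have hnonneg (q : RxT n d) : 0 ≤ momBil L d q q :=
    hL q ((mem_restrictTotalDegree _ _ _).mp q.2)
  have hsymm : LinearMap.IsSymm (momBil L d) :=
    ⟨fun q r => congrArg L (mul_comm (q : MP n) r)⟩
  exact (mem_ker_momBil (p := ⟨p, (mem_restrictTotalDegree _ _ _).mpr hp⟩)).symm.trans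
    (LinearMap.BilinForm.apply_apply_same_eq_zero_iff (momBil L d) hnonneg hsymm).symm

theorem momKer_mono (hsd : s ≤ d) (hL : momPSD L d) : momKer L s ⊆ momKer L d := by
  intro p hp
  obtain ⟨hdeg, horth⟩ := mem_momKer_iff.mp hp
  exact (mem_momKer_iff_apply_mul_self hL (hdeg.trans hsd)).mpr (horth p hdeg)

theorem momPSD.mono (hsd : s ≤ d) (hL : momPSD L d) : momPSD L s := fun p hp => hL p (hp.trans hsd)

theorem momPSD.add (hL : momPSD L d) (hL' : momPSD L' d) : momPSD (L + L') d :=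
  fun p hp => add_nonneg (hL p hp) (hL' p hp)

theorem momKer_add (hL : momPSD L d) (hL' : momPSD L' d) :
    momKer (L + L') d = momKer L d ∩ momKer L' d := by
  ext p
  by_cases hp : p.totalDegree ≤ d
  · rw [Set.mem_inter_iff, mem_momKer_iff_apply_mul_self (hL.add hL') hp,
      mem_momKer_iff_apply_mul_self hL hp, mem_momKer_iff_apply_mul_self hL' hp]
    exact add_eq_zero_iff_of_nonneg (hL p hp) (hL' p hp)
  · exact ⟨fun h => absurd h.1 hp, fun h => absurd h.1.1 hp⟩

theorem add_mem_Kpos (hL : L ∈ Kpos h t) (hL' : L' ∈ Kpos h t) : L + L' ∈ Kpos h t :=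
  ⟨fun g hg => by rw [LinearMap.add_apply, hL.1 g hg, hL'.1 g hg, add_zero], hL.2.add hL'.2⟩

theorem Generic.momKer_subset (hL : Generic h t L) (hL' : L' ∈ Kpos h t) :
    momKer L (t / 2) ⊆ momKer L' (t / 2) := by
  have hadd := momKer_add hL.1.2 hL'.2
  have hle : LinearMap.ker (momBil (L + L') (t / 2)) ≤ LinearMap.ker (momBil L (t / 2)) := by
    intro p hp
    rw [mem_ker_momBil, hadd] at hp
    exact mem_ker_momBil.mpr hp.1
  have heq : LinearMap.ker (momBil (L + L') (t / 2)) = LinearMap.ker (momBil L (t / 2)) := by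
    refine Submodule.eq_of_le_of_finrank_le hle ?_
    have hrank : momRank (L + L') (t / 2) ≤ momRank L (t / 2) := hL.2 _ (add_mem_Kpos hL.1 hL')
    have hsum := LinearMap.finrank_range_add_finrank_ker (momBil (L + L') (t / 2))
    have hL_sum := LinearMap.finrank_range_add_finrank_ker (momBil L (t / 2))
    unfold momRank at hrank
    lia
  intro p hp
  have hp' : (⟨p, (mem_restrictTotalDegree _ _ _).mpr hp.1⟩ : RxT n (t / 2)) ∈
      LinearMap.ker (momBil L (t / 2)) := mem_ker_momBil.mpr hp
  rw [← heq, mem_ker_momBil, hadd] at hp'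
  exact hp'.2

theorem exists_mem_Kpos_momKer_subset {U : Ideal (MP n)} (hU : IsRealIdeal U)
    (hhU : ∀ j, h j ∈ U) (t : ℕ) :
    ∃ L ∈ Kpos h t, momKer L (t / 2) ⊆ U := by
  let φ : MP n →ₐ[ℝ] MP n ⧸ U := Ideal.Quotient.mkₐ ℝ U
  have := hU.isFormallyReal_quotient
  obtain ⟨Λ, hΛ⟩ := exists_linearMap_mul_self_pos ((RxT n (t / 2)).map φ.toLinearMap)
  have hpos {p : MP n} (hp : p.totalDegree ≤ t / 2) (hpU : p ∉ U) : 0 < Λ (φ (p * p)) := by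
    rw [map_mul]
    exact hΛ _ ⟨p, (mem_restrictTotalDegree _ _ _).mpr hp, rfl⟩
      (Ideal.Quotient.eq_zero_iff_mem.not.mpr hpU)
  have hzero {p : MP n} (hpU : p ∈ U) : Λ (φ p) = 0 := by
    rw [show φ p = 0 from Ideal.Quotient.eq_zero_iff_mem.mpr hpU, map_zero]
  refine ⟨Λ ∘ₗ φ.toLinearMap, ⟨?_, fun p hp => ?_⟩, fun p hp => ?_⟩
  · rintro _ ⟨α, j, -, rfl⟩
    exact hzero (U.mul_mem_left _ (hhU j))
  · by_cases hpU : p ∈ U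
    · exact (hzero (U.mul_mem_left p hpU)).ge
    · exact (hpos hp hpU).le
  · by_contra hpU
    exact (hpos hp.1 hpU).ne' ((mem_momKer_iff.mp hp).2 p hp.1)

theorem Generic.momKer_subset_of_isRealIdeal (hL : Generic h t L) {U : Ideal (MP n)}
    (hU : IsRealIdeal U) (hhU : ∀ j, h j ∈ U) : momKer L (t / 2) ⊆ U := by
  obtain ⟨L', hL', hsub⟩ := exists_mem_Kpos_momKer_subset hU hhU t
  exact (hL.momKer_subset hL').trans hsub

end MomentKernel

/-! ### Dimensions of truncated annihilators -/

section Annihilator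

variable {K E : Type*} [Field K] [AddCommGroup E] [Module K E] {U U' S S' : Submodule K E}

theorem finrank_map_dualMap_dualAnnihilator (U S : Submodule K E) :
    Module.finrank K (S.dualAnnihilator.map U.subtype.dualMap) =
      Module.finrank K (U.map S.mkQ) := by
  have hrange : S.dualAnnihilator.map U.subtype.dualMap =
      LinearMap.range (S.mkQ ∘ₗ U.subtype).dualMap := by
    rw [← S.range_dualMap_mkQ_eq, ← LinearMap.range_comp, LinearMap.dualMap_comp_dualMap]
  rw [hrange, LinearMap.finrank_range_dualMap_eq_finrank_range, LinearMap.range_comp,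
    U.range_subtype]

theorem le_sup_of_finrank_map_mkQ_eq [FiniteDimensional K U'] (hUU' : U ≤ U')
    (hdim : Module.finrank K (U'.map S.mkQ) = Module.finrank K (U.map S.mkQ)) :
    U' ≤ U ⊔ S := by
  have hmap : U.map S.mkQ = U'.map S.mkQ :=
    Submodule.eq_of_le_of_finrank_eq (Submodule.map_mono hUU') hdim.symm
  rw [sup_comm, ← Submodule.comap_map_mkQ, hmap]
  exact Submodule.le_comap_map _ _

theorem inf_le_of_finrank_map_mkQ_eq [FiniteDimensional K U] (hSS' : S ≤ S')
    (hdim : Module.finrank K (U.map S.mkQ) = Module.finrank K (U.map S'.mkQ)) :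
    U ⊓ S' ≤ S := by
  have hker (T : Submodule K E) :
      LinearMap.ker (T.mkQ ∘ₗ U.subtype) = T.comap U.subtype := by
    rw [LinearMap.ker_comp, T.ker_mkQ]
  have hdim_ker (T : Submodule K E) :
      Module.finrank K (U.map T.mkQ) + Module.finrank K (T.comap U.subtype) =
        Module.finrank K U := by
    rw [← hker, ← LinearMap.finrank_range_add_finrank_ker (T.mkQ ∘ₗ U.subtype),
      LinearMap.range_comp, U.range_subtype]
  have hcomap : S.comap U.subtype = S'.comap U.subtype := by
    refine Submodule.eq_of_le_of_finrank_eq (Submodule.comap_mono hSS') ?_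
    have hS := hdim_ker S
    have hS' := hdim_ker S'
    lia
  rintro x ⟨hxU, hxS'⟩
  have hx : (⟨x, hxU⟩ : U) ∈ S'.comap U.subtype := hxS'
  rwa [← hcomap] at hx

end Annihilator

section RestrictTotalDegree

variable {σ R : Type*} [CommSemiring R] {k l : ℕ}

theorem restrictTotalDegree_mono (hkl : k ≤ l) :
    restrictTotalDegree σ R k ≤ restrictTotalDegree σ R l := fun _ hp =>
  (mem_restrictTotalDegree _ _ _).mpr (((mem_restrictTotalDegree _ _ _).mp hp).trans hkl)

theorem mul_mem_restrictTotalDegree {p q : MvPolynomial σ R} (hp : p ∈ restrictTotalDegree σ R k)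
    (hq : q ∈ restrictTotalDegree σ R l) : p * q ∈ restrictTotalDegree σ R (k + l) := by
  rw [mem_restrictTotalDegree] at *
  exact (totalDegree_mul p q).trans (add_le_add hp hq)

theorem X_mul_mem_restrictTotalDegree (i : σ) {p : MvPolynomial σ R}
    (hp : p ∈ restrictTotalDegree σ R k) : X i * p ∈ restrictTotalDegree σ R (k + 1) := by
  rw [add_comm]
  refine mul_mem_restrictTotalDegree ((mem_restrictTotalDegree _ _ _).mpr ?_) hp
  exact (totalDegree_monomial_le _ _).trans_eq (Finsupp.sum_single_index rfl)

end RestrictTotalDegree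

section DimProj

variable {n a b : ℕ} {G : Set (MP n)}

theorem dimProj_eq_finrank_map_mkQ (s : ℕ) (G : Set (MP n)) :
    dimProj s G = Module.finrank ℝ ((RxT n s).map (Submodule.span ℝ G).mkQ) :=
  finrank_map_dualMap_dualAnnihilator _ _

theorem RxT_le_sup_span_of_dimProj_eq (hab : a ≤ b) (hdim : dimProj b G = dimProj a G) :
    RxT n b ≤ RxT n a ⊔ Submodule.span ℝ G := by
  rw [dimProj_eq_finrank_map_mkQ, dimProj_eq_finrank_map_mkQ] at hdim
  exact le_sup_of_finrank_map_mkQ_eq (restrictTotalDegree_mono hab) hdim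

theorem X_mul_mem_span_plusOp (i : Fin n) {p : MP n} (hp : p ∈ Submodule.span ℝ G) :
    X i * p ∈ Submodule.span ℝ (plusOp G) := by
  have hmap : (Submodule.span ℝ G).map (LinearMap.mulLeft ℝ (X i)) ≤
      Submodule.span ℝ (plusOp G) := by
    rw [Submodule.map_span]
    exact Submodule.span_mono
      (Set.subset_union_of_subset_right (Set.subset_iUnion (fun j => (X j * ·) '' G) i) G)
  exact hmap ⟨p, hp, rfl⟩

theorem X_mul_mem_span_of_dimProj_eq (hdim : dimProj b G = dimProj b (plusOp G)) (i : Fin n)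
    {p : MP n} (hp : p ∈ Submodule.span ℝ G) (hXp : X i * p ∈ RxT n b) :
    X i * p ∈ Submodule.span ℝ G := by
  rw [dimProj_eq_finrank_map_mkQ, dimProj_eq_finrank_map_mkQ] at hdim
  exact inf_le_of_finrank_map_mkQ_eq (Submodule.span_mono Set.subset_union_left) hdim
    ⟨hXp, X_mul_mem_span_plusOp i hp⟩

end DimProj

/-! ### Mourrain's normal form criterion -/

theorem exists_generalizedInverse {K E F : Type*} [Field K] [AddCommGroup E]
    [Module K E] [AddCommGroup F] [Module K F] (f : E →ₗ[K] F) :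
    ∃ g : F →ₗ[K] E, ∀ x, f (g (f x)) = f x := by
  obtain ⟨g₀, hg₀⟩ := f.rangeRestrict.exists_rightInverse_of_surjective f.range_rangeRestrict
  obtain ⟨g, rfl⟩ := g₀.exists_extend
  exact ⟨g, fun x => congrArg Subtype.val (LinearMap.congr_fun hg₀ ⟨f x, x, rfl⟩)⟩

open scoped IsMulCommutative in
theorem exists_algHom_of_commute {σ R A : Type*} [CommRing R] [Ring A] [Algebra R A] (T : σ → A)
    (hT : ∀ i j, Commute (T i) (T j)) : ∃ Θ : MvPolynomial σ R →ₐ[R] A, ∀ i, Θ (X i) = T i := by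
  let S := Algebra.adjoin R (Set.range T)
  have : IsMulCommutative S :=
    Algebra.isMulCommutative_adjoin R (by rintro _ ⟨i, rfl⟩ _ ⟨j, rfl⟩; exact hT i j)
  let T' (i : σ) : S := ⟨T i, Algebra.subset_adjoin ⟨i, rfl⟩⟩
  exact ⟨S.val.comp (aeval T'), fun i => congrArg S.val (aeval_X T' i)⟩

section NormalForm

variable {σ K : Type*} [Field K] {d D : ℕ} {V : Submodule K (MvPolynomial σ K)}

theorem restrictTotalDegree_le_of_X_mul_mem (h1 : 1 ∈ V)
    (hX : ∀ i, ∀ p ∈ V, p.totalDegree < D → X i * p ∈ V) : restrictTotalDegree σ K D ≤ V := by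
  have hmonomial (α : σ →₀ ℕ) (c : K) :
      (monomial α c).totalDegree ≤ D → monomial α c ∈ V := by
    refine induction_on_monomial (motive := fun p => p.totalDegree ≤ D → p ∈ V) ?_ ?_ α c
    · intro c _
      rw [← mul_one (C c), ← smul_eq_C_mul]
      exact V.smul_mem c h1
    · intro p i ih hdeg
      rcases eq_or_ne p 0 with rfl | hp
      · simp only [zero_mul, zero_mem]
      · rw [totalDegree_mul_of_isDomain hp (X_ne_zero i), totalDegree_X] at hdeg
        rw [mul_comm]
        exact hX i p (ih (by lia)) hdeg
  intro p hp
  rw [mem_restrictTotalDegree] at hp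
  rw [p.as_sum]
  refine sum_mem fun α hα => hmonomial α _ ((totalDegree_monomial_le α _).trans ?_)
  exact (le_totalDegree hα).trans hp

/-- The hypothesis of Mourrain's normal form criterion: modulo `V`, polynomials of degree at most
`D` reduce to degree at most `d`, and `V` is closed under those multiplications by variables
that stay in degree at most `D`. -/
structure IsNormalFormSpace (d D : ℕ) (V : Submodule K (MvPolynomial σ K)) : Prop where
  le_sup : restrictTotalDegree σ K D ≤ restrictTotalDegree σ K d ⊔ V
  X_mul_mem : ∀ i, ∀ p ∈ V, X i * p ∈ restrictTotalDegree σ K D → X i * p ∈ V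

namespace IsNormalFormSpace

variable (hV : IsNormalFormSpace d D V)
include hV

theorem exists_section : ∃ ρ : (MvPolynomial σ K ⧸ V) →ₗ[K] MvPolynomial σ K,
    (∀ x, ρ x ∈ restrictTotalDegree σ K d) ∧
      ∀ p ∈ restrictTotalDegree σ K D, V.mkQ (ρ (V.mkQ p)) = V.mkQ p := by
  obtain ⟨g, hg⟩ := exists_generalizedInverse
    (V.mkQ ∘ₗ (restrictTotalDegree σ K d).subtype)
  refine ⟨(restrictTotalDegree σ K d).subtype ∘ₗ g, fun x => (g x).2, fun p hp => ?_⟩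
  obtain ⟨r, hr, v, hv, rfl⟩ := Submodule.mem_sup.mp (hV.le_sup hp)
  have hrv : V.mkQ (r + v) = V.mkQ r := by
    rw [map_add, Submodule.mkQ_apply V v, (Submodule.Quotient.mk_eq_zero V).mpr hv, add_zero]
  rw [hrv]
  exact hg ⟨r, hr⟩

theorem mkQ_X_mul_eq (i : σ) {p q : MvPolynomial σ K} (hpq : V.mkQ p = V.mkQ q)
    (hp : X i * p ∈ restrictTotalDegree σ K D) (hq : X i * q ∈ restrictTotalDegree σ K D) :
    V.mkQ (X i * p) = V.mkQ (X i * q) := by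
  rw [Submodule.mkQ_apply, Submodule.mkQ_apply, Submodule.Quotient.eq] at hpq ⊢
  rw [← mul_sub]
  refine hV.X_mul_mem i _ hpq ?_
  rw [mul_sub]
  exact sub_mem hp hq

theorem exists_commuting_mul_X (hdD : d + 2 ≤ D) :
    ∃ T : σ → Module.End K (MvPolynomial σ K ⧸ V), (∀ i j, Commute (T i) (T j)) ∧
      ∀ i p, p.totalDegree < D → T i (V.mkQ p) = V.mkQ (X i * p) := by
  obtain ⟨ρ, hρ, hmk⟩ := hV.exists_section
  let T (i : σ) : Module.End K (MvPolynomial σ K ⧸ V) :=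
    V.mkQ ∘ₗ LinearMap.mulLeft K (X i) ∘ₗ ρ
  have hT_mk (i : σ) (p : MvPolynomial σ K) (hp : p.totalDegree < D) :
      T i (V.mkQ p) = V.mkQ (X i * p) := by
    refine hV.mkQ_X_mul_eq i (hmk p ?_)
      (restrictTotalDegree_mono (by lia) (X_mul_mem_restrictTotalDegree i (hρ _)))
      (restrictTotalDegree_mono hp (X_mul_mem_restrictTotalDegree i ?_))
    · exact (mem_restrictTotalDegree _ _ _).mpr hp.le
    · exact (mem_restrictTotalDegree _ _ _).mpr le_rfl
  have hT_T (i j : σ) (x) : T i (T j x) = V.mkQ (X i * (X j * ρ x)) := by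
    have hdeg : (X j * ρ x).totalDegree ≤ d + 1 :=
      (mem_restrictTotalDegree _ _ _).mp (X_mul_mem_restrictTotalDegree j (hρ x))
    rw [show T j x = V.mkQ (X j * ρ x) from rfl, hT_mk i _ ((Nat.lt_succ_of_le hdeg).trans_le hdD)]
  -- `X i * (X j * ρ x)` still has degree at most `D`, so `T i (T j x)` is symmetric in `i`, `j`.
  refine ⟨T, fun i j => LinearMap.ext fun x => ?_, hT_mk⟩
  rw [Module.End.mul_apply, Module.End.mul_apply, hT_T, hT_T, mul_left_comm]

theorem exists_algHom_end (hdD : d + 2 ≤ D) :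
    ∃ Θ : MvPolynomial σ K →ₐ[K] Module.End K (MvPolynomial σ K ⧸ V),
      ∀ p ∈ restrictTotalDegree σ K D, Θ p (V.mkQ 1) = V.mkQ p := by
  obtain ⟨T, hcomm, hT_mk⟩ := hV.exists_commuting_mul_X hdD
  obtain ⟨Θ, hΘ⟩ := exists_algHom_of_commute (R := K) T hcomm
  refine ⟨Θ, fun p hp => ?_⟩
  let agree := LinearMap.eqLocus (LinearMap.applyₗ (V.mkQ 1) ∘ₗ Θ.toLinearMap) V.mkQ
  suffices restrictTotalDegree σ K D ≤ agree from this hp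
  refine restrictTotalDegree_le_of_X_mul_mem ?_ fun i p hp hdeg => ?_
  · exact LinearMap.congr_fun (map_one Θ) _
  · have hp : Θ p (V.mkQ 1) = V.mkQ p := hp
    change Θ (X i * p) (V.mkQ 1) = V.mkQ (X i * p)
    rw [map_mul, hΘ, Module.End.mul_apply, hp, hT_mk i p hdeg]

theorem mem_of_mem_ideal_span (hdD : d + 2 ≤ D) {p : MvPolynomial σ K}
    (hp : p ∈ Ideal.span (V ⊓ restrictTotalDegree σ K D : Submodule K (MvPolynomial σ K)))
    (hdeg : p ∈ restrictTotalDegree σ K D) : p ∈ V := by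
  obtain ⟨Θ, hΘ⟩ := hV.exists_algHom_end hdD
  have hzero : Θ p (V.mkQ 1) = 0 := by
    clear hdeg
    induction hp using Submodule.span_induction with
    | mem p hp => rw [hΘ p hp.2]; exact (Submodule.Quotient.mk_eq_zero V).mpr hp.1
    | zero => rw [map_zero, LinearMap.zero_apply]
    | add p q _ _ hp hq => rw [map_add, LinearMap.add_apply, hp, hq, add_zero]
    | smul r p _ hp => rw [smul_eq_mul, map_mul, Module.End.mul_apply, hp, map_zero]
  rwa [hΘ p hdeg, Submodule.mkQ_apply, Submodule.Quotient.mk_eq_zero] at hzero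

theorem exists_sub_mem_ideal_span (hdD : d + 1 ≤ D) (p : MvPolynomial σ K) :
    ∃ q ∈ restrictTotalDegree σ K d,
      p - q ∈ Ideal.span (V ⊓ restrictTotalDegree σ K (d + 1) :
        Submodule K (MvPolynomial σ K)) := by
  induction p using MvPolynomial.induction_on with
  | C a => exact ⟨C a, (mem_restrictTotalDegree _ _ _).mpr ((totalDegree_C a).trans_le d.zero_le),
      by rw [sub_self]; exact zero_mem _⟩
  | add p p' hp hp' =>
    obtain ⟨q, hq, hpq⟩ := hp
    obtain ⟨q', hq', hpq'⟩ := hp'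
    exact ⟨q + q', add_mem hq hq', by rw [add_sub_add_comm]; exact add_mem hpq hpq'⟩
  | mul_X p i hp =>
    obtain ⟨q, hq, hpq⟩ := hp
    have hXq := X_mul_mem_restrictTotalDegree i hq
    obtain ⟨r, hr, v, hv, hrv⟩ := Submodule.mem_sup.mp
      (hV.le_sup (restrictTotalDegree_mono hdD hXq))
    have hv_deg : v ∈ restrictTotalDegree σ K (d + 1) := by
      rw [eq_sub_of_add_eq' hrv]
      exact sub_mem hXq (restrictTotalDegree_mono d.le_succ hr)
    refine ⟨r, hr, ?_⟩
    rw [show p * X i - r = X i * (p - q) + v by linear_combination -hrv]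
    exact add_mem (Ideal.mul_mem_left _ _ hpq) (Ideal.subset_span ⟨hv, hv_deg⟩)

end IsNormalFormSpace

end NormalForm

/-! ### Flat extension -/

section MomentIdeal

variable {K A : Type*} [Field K] [CommRing A] [Algebra K A]

/-- The kernel of the full moment matrix of a linear functional `Λ` on an algebra. -/
def momentIdeal (Λ : A →ₗ[K] K) : Ideal A where
  carrier := {p | ∀ q, Λ (p * q) = 0}
  zero_mem' q := by rw [zero_mul, map_zero]
  add_mem' hp hp' q := by rw [add_mul, map_add, hp q, hp' q, add_zero]
  smul_mem' r p hp q := by rw [smul_eq_mul, mul_comm r, mul_assoc, hp]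

theorem isRealIdeal_momentIdeal [LinearOrder K] [IsStrictOrderedRing K] {Λ : A →ₗ[K] K}
    (hΛ : ∀ p, 0 ≤ Λ (p * p)) : IsRealIdeal (momentIdeal Λ) := by
  intro a σ hσ h
  have hσ_nonneg : 0 ≤ Λ σ := by
    clear h
    induction hσ with
    | zero => rw [map_zero]
    | sq_add b _ ih => rw [map_add]; exact add_nonneg (hΛ b) ih
  have hsum : Λ (a * a) + Λ σ = 0 := by
    simpa only [mul_one, sq, map_add] using h 1
  have ha : Λ (a * a) = 0 := ((add_eq_zero_iff_of_nonneg (hΛ a) hσ_nonneg).mp hsum).1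
  let B : LinearMap.BilinForm K A := (LinearMap.mul K A).compr₂ Λ
  have hB : LinearMap.IsSymm B := ⟨fun p q => congrArg Λ (mul_comm p q)⟩
  exact LinearMap.congr_fun ((B.apply_apply_same_eq_zero_iff hΛ hB).mp ha)

theorem apply_mul_self_eq_of_sub_mem_momentIdeal {Λ : A →ₗ[K] K} {p q : A}
    (h : p - q ∈ momentIdeal Λ) : Λ (p * p) = Λ (q * q) := by
  rw [← sub_eq_zero, ← map_sub, show p * p - q * q = (p - q) * (p + q) by ring]
  exact h _

end MomentIdeal

theorem exists_dual_eqOn_of_eqOn_inf {K E : Type*} [Field K] [AddCommGroup E] [Module K E]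
    {U J : Submodule K E} {L : Module.Dual K E} (hL : ∀ x ∈ U ⊓ J, L x = 0) :
    ∃ Λ : Module.Dual K E, (∀ x ∈ U, Λ x = L x) ∧ ∀ x ∈ J, Λ x = 0 := by
  have hmem : L ∘ₗ U.subtype ∈ LinearMap.range (J.mkQ ∘ₗ U.subtype).dualMap := by
    rw [LinearMap.range_dualMap_eq_dualAnnihilator_ker, Submodule.mem_dualAnnihilator]
    exact fun x hx => hL x ⟨x.2, (Submodule.Quotient.mk_eq_zero J).mp hx⟩
  obtain ⟨g, hg⟩ := hmem
  refine ⟨g ∘ₗ J.mkQ, fun x hx => LinearMap.congr_fun hg ⟨x, hx⟩, fun x hx => ?_⟩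
  rw [LinearMap.comp_apply, Submodule.mkQ_apply, (Submodule.Quotient.mk_eq_zero J).mpr hx,
    map_zero]

theorem IsNormalFormSpace.exists_extension {σ K : Type*} [Field K] {d D : ℕ}
    {V : Submodule K (MvPolynomial σ K)} (hV : IsNormalFormSpace d D V) (hdD : d + 2 ≤ D)
    {L : Module.Dual K (MvPolynomial σ K)} (hLV : ∀ p ∈ V, L p = 0) :
    ∃ Λ : Module.Dual K (MvPolynomial σ K), (∀ p ∈ restrictTotalDegree σ K D, Λ p = L p) ∧
      ∀ p ∈ V ⊓ restrictTotalDegree σ K D, p ∈ momentIdeal Λ := by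
  let J : Ideal (MvPolynomial σ K) :=
    Ideal.span (V ⊓ restrictTotalDegree σ K D : Submodule K (MvPolynomial σ K))
  obtain ⟨Λ, hΛL, hΛJ⟩ := exists_dual_eqOn_of_eqOn_inf (U := restrictTotalDegree σ K D)
    (J := J.restrictScalars K) (L := L) fun p hp =>
      hLV p (hV.mem_of_mem_ideal_span hdD hp.2 hp.1)
  exact ⟨Λ, hΛL, fun p hp q => hΛJ _ (J.mul_mem_right q (Ideal.subset_span hp))⟩

section FlatExtension

variable {n d : ℕ} {V : Submodule ℝ (MP n)} {L Λ : Module.Dual ℝ (MP n)}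

theorem span_le_span_momKer (hΛL : ∀ p ∈ RxT n (2 * (d + 1)), Λ p = L p)
    (hΛV : ∀ p ∈ V ⊓ RxT n (2 * (d + 1)), p ∈ momentIdeal Λ) :
    Ideal.span (V ⊓ RxT n (d + 1) : Submodule ℝ (MP n)) ≤ Ideal.span (momKer L (d + 1)) := by
  refine Ideal.span_mono fun p hp => mem_momKer_iff.mpr
    ⟨(mem_restrictTotalDegree _ _ _).mp hp.2, fun q hq => ?_⟩
  have hpq : p * q ∈ RxT n (2 * (d + 1)) := by
    rw [two_mul]
    exact mul_mem_restrictTotalDegree hp.2 ((mem_restrictTotalDegree _ _ _).mpr hq)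
  rw [← hΛL _ hpq]
  exact hΛV p ⟨hp.1, restrictTotalDegree_mono (by lia) hp.2⟩ q

theorem IsNormalFormSpace.momentIdeal_eq_span_momKer (hV : IsNormalFormSpace d (2 * (d + 1)) V)
    (hΛL : ∀ p ∈ RxT n (2 * (d + 1)), Λ p = L p)
    (hΛV : ∀ p ∈ V ⊓ RxT n (2 * (d + 1)), p ∈ momentIdeal Λ) :
    momentIdeal Λ = Ideal.span (momKer L (d + 1)) := by
  have hspan : Ideal.span (V ⊓ RxT n (d + 1) : Submodule ℝ (MP n)) ≤ momentIdeal Λ :=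
    Ideal.span_le.mpr fun p hp => hΛV p ⟨hp.1, restrictTotalDegree_mono (by lia) hp.2⟩
  have hmul {p q : MP n} (hp : p.totalDegree ≤ d + 1) (hq : q.totalDegree ≤ d + 1) :
      Λ (p * q) = L (p * q) :=
    hΛL _ ((mem_restrictTotalDegree _ _ _).mpr ((totalDegree_mul p q).trans (by lia)))
  apply le_antisymm
  · intro p hp
    obtain ⟨r, hr, hpr⟩ := hV.exists_sub_mem_ideal_span (by lia) p
    have hr_deg : r.totalDegree ≤ d + 1 := ((mem_restrictTotalDegree _ _ _).mp hr).trans d.le_succ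
    have hr_mom : r ∈ momentIdeal Λ := by
      rw [← sub_sub_cancel p r]
      exact sub_mem hp (hspan hpr)
    have hr_mem : r ∈ momKer L (d + 1) := by
      refine mem_momKer_iff.mpr ⟨hr_deg, fun q hq => ?_⟩
      rw [← hmul hr_deg hq]
      exact hr_mom q
    rw [← sub_add_cancel p r]
    exact add_mem (span_le_span_momKer hΛL hΛV hpr) (Ideal.subset_span hr_mem)
  · refine Ideal.span_le.mpr fun p hp q => ?_
    obtain ⟨hp_deg, hp_orth⟩ := mem_momKer_iff.mp hp
    obtain ⟨r, hr, hqr⟩ := hV.exists_sub_mem_ideal_span (by lia) q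
    have hr_deg : r.totalDegree ≤ d + 1 := ((mem_restrictTotalDegree _ _ _).mp hr).trans d.le_succ
    have hqr_zero : Λ ((q - r) * p) = 0 := hspan hqr p
    rw [← sub_add_cancel q r, mul_add, map_add, mul_comm p (q - r), hqr_zero, hmul hp_deg hr_deg,
      hp_orth r hr_deg, add_zero]

theorem IsNormalFormSpace.isRealIdeal_span_momKer (hV : IsNormalFormSpace d (2 * (d + 1)) V)
    (hLV : ∀ p ∈ V, L p = 0) (hL : momPSD L (d + 1)) :
    IsRealIdeal (Ideal.span (momKer L (d + 1))) := by
  obtain ⟨Λ, hΛL, hΛV⟩ := hV.exists_extension (by lia) hLV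
  have hideal := hV.momentIdeal_eq_span_momKer hΛL hΛV
  rw [← hideal]
  refine isRealIdeal_momentIdeal fun p => ?_
  obtain ⟨r, hr, hpr⟩ := hV.exists_sub_mem_ideal_span (by lia) p
  have hpr' : p - r ∈ momentIdeal Λ := hideal ▸ span_le_span_momKer hΛL hΛV hpr
  rw [apply_mul_self_eq_of_sub_mem_momentIdeal hpr', hΛL]
  · exact hL r (((mem_restrictTotalDegree _ _ _).mp hr).trans d.le_succ)
  · exact restrictTotalDegree_mono (by lia) (mul_mem_restrictTotalDegree hr hr)

end FlatExtension

theorem apply_eq_zero_of_mem_span {n m t : ℕ} {h : Fin m → MP n} {L : Module.Dual ℝ (MP n)}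
    (hL : L ∈ Kpos h t) {p : MP n} (hp : p ∈ Submodule.span ℝ (Hset h t ∪ Wset h t L)) :
    L p = 0 := by
  suffices Submodule.span ℝ (Hset h t ∪ Wset h t L) ≤ LinearMap.ker L from this hp
  refine Submodule.span_le.mpr (Set.union_subset hL.1 ?_)
  rintro _ ⟨α, g, hα, hg, rfl⟩
  change L (monomial α 1 * g) = 0
  rw [mul_comm]
  exact hg.2 α hα

theorem mem_momKer_of_mem_Kpos {n m s t : ℕ} {h : Fin m → MP n} {L : Module.Dual ℝ (MP n)}
    (hL : L ∈ Kpos h t) (hst : s ≤ t / 2) {j : Fin m} (hj : (h j).totalDegree ≤ s) :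
    h j ∈ momKer L s := by
  refine ⟨hj, fun β hβ => ?_⟩
  rw [mul_comm]
  exact hL.1 _ ⟨β, j, by lia, rfl⟩

/-- Let `L*` be generic in `K_{t,⪰}`, `1 ≤ s ≤ ⌊t/2⌋`, `G_t = H_t ∪ W_t`,
and assume `dim π_{2s}(G_t^⊥) = dim π_{s−1}(G_t^⊥) = dim π_{2s}((G_t⁺)^⊥)`.  Then the ideal
`J = (Ker M_s(L*))` is real radical and contained in the vanishing ideal of `V_ℝ(I)`;
if moreover `s ≥ D = max_j deg h_j`, then `J = √[ℝ]I`. -/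
theorem kernelIdeal_realRadical {n m s t : ℕ} (h : Fin m → MP n)
    (hs1 : 1 ≤ s) (hst : s ≤ t / 2)
    (Lstar : Module.Dual ℝ (MP n)) (hgen : Generic h t Lstar)
    (hdim1 : dimProj (2 * s) (Hset h t ∪ Wset h t Lstar) =
      dimProj (s - 1) (Hset h t ∪ Wset h t Lstar))
    (hdim2 : dimProj (2 * s) (Hset h t ∪ Wset h t Lstar) =
      dimProj (2 * s) (plusOp (Hset h t ∪ Wset h t Lstar)))
    (J : Ideal (MP n)) (hJ : J = Ideal.span (momKer Lstar s)) :
    (J : Set (MP n)) = realRad J ∧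
    (∀ p ∈ J, ∀ v : Fin n → ℝ, (∀ j, eval v (h j) = 0) → eval v p = 0) ∧
    ((∀ j, (h j).totalDegree ≤ s) →
      (J : Set (MP n)) = realRad (Ideal.span (Set.range h))) := by
  obtain ⟨d, rfl⟩ := Nat.exists_eq_add_of_le' hs1
  subst hJ
  have hV : IsNormalFormSpace d (2 * (d + 1))
      (Submodule.span ℝ (Hset h t ∪ Wset h t Lstar)) :=
    ⟨RxT_le_sup_span_of_dimProj_eq (by lia) hdim1,
      fun i _ => X_mul_mem_span_of_dimProj_eq hdim2 i⟩
  have hreal : IsRealIdeal (Ideal.span (momKer Lstar (d + 1))) :=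
    hV.isRealIdeal_span_momKer (fun _ => apply_eq_zero_of_mem_span hgen.1) (hgen.1.2.mono hst)
  have hle {U : Ideal (MP n)} (hU : IsRealIdeal U) (hhU : ∀ j, h j ∈ U) :
      Ideal.span (momKer Lstar (d + 1)) ≤ U :=
    Ideal.span_le.mpr
      ((momKer_mono hst hgen.1.2).trans (hgen.momKer_subset_of_isRealIdeal hU hhU))
  refine ⟨?_, fun p hp v hv => ?_, fun hdeg => ?_⟩
  · rw [← coe_realRadical, hreal.realRadical_eq]
  · exact hle (isRealIdeal_ker (eval v)) hv hp
  · rw [← coe_realRadical]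
    refine congrArg _ (le_antisymm (hle (isRealIdeal_realRadical _) fun j => ?_) ?_)
    · exact le_realRadical _ (Ideal.subset_span ⟨j, rfl⟩)
    · refine hreal.realRadical_le (Ideal.span_le.mpr (Set.range_subset_iff.mpr fun j => ?_))
      exact Ideal.subset_span (mem_momKer_of_mem_Kpos hgen.1 hst (hdeg j))
end

section
/- Let 1 ≤ s ≤ ⌊t/2⌋ and let G_t = H_t ∪ W_t. If rank M_s(L*) = rank M_{s−1}(L*) holds for some generic L* ∈ K_{t,⪰}, then rank M_s(L) = rank M_{s−1}(L) holds for every linear functional L on ℝ[x]_t vanishing on G_t (i.e. for every L ∈ G_t^⊥). -/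
open MvPolynomial

/-!
For a symmetric form `B` on a finite-dimensional space `V` and a subspace `U ≤ V`, the restriction
of `B` to `U` has the same rank as `B` iff `V = U + Ker B`. Applied to moment matrices,
`rank M_s(L) = rank M_r(L)` means `ℝ[x]_s = ℝ[x]_r + Ker M_s(L)`, a property which persists when
`Ker M_s(L)` grows. If `M_T(L*) ⪰ 0`, Cauchy-Schwarz gives `Ker M_s(L*) ⊆ Ker M_T(L*)` for `s ≤ T`;
hence a functional `L` that vanishes on the multiples `x^α g` of the `g ∈ Ker M_T(L*)` satisfies
`Ker M_s(L*) ⊆ Ker M_s(L)`.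
-/

theorem map_range_eq_range_iff_sup_ker_eq_top {R M₁ M₂ M₃ : Type*} [Ring R]
    [AddCommGroup M₁] [Module R M₁] [AddCommGroup M₂] [Module R M₂] [AddCommGroup M₃] [Module R M₃]
    {ι : M₁ →ₗ[R] M₂} {f : M₂ →ₗ[R] M₃} :
    (LinearMap.range ι).map f = LinearMap.range f ↔
      LinearMap.range ι ⊔ LinearMap.ker f = ⊤ := by
  rw [le_antisymm_iff, and_iff_right LinearMap.map_le_range, LinearMap.range_eq_map f,
    Submodule.map_le_iff_le_comap, Submodule.comap_map_eq, top_le_iff]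

section CommRing

variable {R M N : Type*} [CommRing R] [AddCommGroup M] [Module R M] [AddCommGroup N] [Module R N]
  {B : LinearMap.BilinForm R M} {ι : N →ₗ[R] M}

theorem range_compl₁₂_self (B : LinearMap.BilinForm R M) (ι : N →ₗ[R] M) :
    LinearMap.range (B.compl₁₂ ι ι) = ((LinearMap.range ι).map B).map ι.dualMap := by
  rw [← LinearMap.range_comp, ← LinearMap.range_comp]
  rfl

theorem disjoint_range_ker_dualMap (hB : B.IsRefl)
    (htop : LinearMap.range ι ⊔ LinearMap.ker B = ⊤) :
    Disjoint (LinearMap.range B) (LinearMap.ker ι.dualMap) := by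
  rw [LinearMap.disjoint_ker]
  rintro _ ⟨v, rfl⟩ hv
  ext x
  obtain ⟨_, ⟨w, rfl⟩, k, hk, rfl⟩ := Submodule.mem_sup.1 (htop ▸ Submodule.mem_top : x ∈ _)
  have hvw : B v (ι w) = 0 := LinearMap.congr_fun hv w
  have hvk : B v k = 0 := hB k v (LinearMap.congr_fun hk v)
  rw [map_add, hvw, hvk, add_zero, LinearMap.zero_apply]

end CommRing

theorem finrank_range_compl₁₂_self_eq_iff {K V W : Type*} [Field K] [AddCommGroup V] [Module K V]
    [FiniteDimensional K V] [AddCommGroup W] [Module K W] {B : LinearMap.BilinForm K V}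
    {ι : W →ₗ[K] V} (hB : B.IsRefl) :
    Module.finrank K (LinearMap.range B) = Module.finrank K (LinearMap.range (B.compl₁₂ ι ι)) ↔
      LinearMap.range ι ⊔ LinearMap.ker B = ⊤ := by
  constructor
  · intro hrank
    rw [range_compl₁₂_self] at hrank
    exact map_range_eq_range_iff_sup_ker_eq_top.1 <|
      Submodule.eq_of_le_of_finrank_le LinearMap.map_le_range
        (hrank.trans_le (Submodule.finrank_map_le _ _))
  · intro htop
    have hinj : Function.Injective (ι.dualMap.domRestrict (LinearMap.range B)) :=
      LinearMap.injective_domRestrict_iff.2 (disjoint_range_ker_dualMap hB htop)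
    rw [range_compl₁₂_self, map_range_eq_range_iff_sup_ker_eq_top.2 htop,
      ← LinearMap.range_domRestrict, LinearMap.finrank_range_of_inj hinj]

section MomentMatrix

variable {n r s T : ℕ} {L L' : Module.Dual ℝ (MP n)}

theorem RxT_mono (hrs : r ≤ s) : RxT n r ≤ RxT n s :=
  restrictSupport_mono ℝ fun _ hα => le_trans hα hrs

theorem isSymm_momBil (L : Module.Dual ℝ (MP n)) (s : ℕ) : (momBil L s).IsSymm :=
  ⟨fun p q => congrArg L (mul_comm (p : MP n) q)⟩

theorem momBil_eq_compl₁₂ (L : Module.Dual ℝ (MP n)) (hrs : r ≤ s) :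
    momBil L r = (momBil L s).compl₁₂ (Submodule.inclusion (RxT_mono hrs))
      (Submodule.inclusion (RxT_mono hrs)) :=
  rfl

theorem coe_mem_momKer_iff {p : RxT n s} :
    (p : MP n) ∈ momKer L s ↔ p ∈ LinearMap.ker (momBil L s) := by
  constructor
  · rintro ⟨-, hp⟩
    have hle : RxT n s ≤ LinearMap.ker (L ∘ₗ LinearMap.mulLeft ℝ (p : MP n)) := by
      refine (restrictSupport_eq_span ℝ {α | mdeg α ≤ s}).trans_le (Submodule.span_le.2 ?_)
      rintro _ ⟨β, hβ, rfl⟩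
      exact hp β hβ
    ext q
    exact hle q.2
  · refine fun hp => ⟨(mem_restrictTotalDegree _ _ _).1 p.2, fun β hβ => ?_⟩
    have hβ' : monomial β 1 ∈ RxT n s :=
      (mem_restrictTotalDegree _ _ _).2 ((totalDegree_monomial_le _ _).trans hβ)
    exact LinearMap.congr_fun hp ⟨_, hβ'⟩

theorem momKer_subset_of_momPSD (hsT : s ≤ T) (hL : momPSD L T) : momKer L s ⊆ momKer L T := by
  intro p hp
  have hps : p ∈ RxT n s := (mem_restrictTotalDegree _ _ _).2 hp.1
  have hpp : L (p * p) = 0 :=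
    LinearMap.congr_fun (coe_mem_momKer_iff (p := ⟨p, hps⟩).1 hp) ⟨p, hps⟩
  have hnonneg (q : RxT n T) : 0 ≤ momBil L T q q :=
    hL q ((mem_restrictTotalDegree _ _ _).1 q.2)
  exact coe_mem_momKer_iff (p := ⟨p, RxT_mono hsT hps⟩).2 <|
    (LinearMap.BilinForm.apply_apply_same_eq_zero_iff _ hnonneg (isSymm_momBil L T)).1 hpp

theorem momRank_eq_momRank_iff (hrs : r ≤ s) :
    momRank L s = momRank L r ↔
      LinearMap.range (Submodule.inclusion (RxT_mono (n := n) hrs)) ⊔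
        LinearMap.ker (momBil L s) = ⊤ := by
  rw [momRank, momRank, momBil_eq_compl₁₂ L hrs]
  exact finrank_range_compl₁₂_self_eq_iff (isSymm_momBil L s).isRefl

theorem momRank_eq_of_momKer_subset (hrs : r ≤ s) (hker : momKer L s ⊆ momKer L' s)
    (hrank : momRank L s = momRank L r) : momRank L' s = momRank L' r := by
  have hle : LinearMap.ker (momBil L s) ≤ LinearMap.ker (momBil L' s) := fun _ hp =>
    coe_mem_momKer_iff.1 (hker (coe_mem_momKer_iff.2 hp))
  rw [momRank_eq_momRank_iff hrs] at hrank ⊢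
  exact top_le_iff.1 (hrank.ge.trans (sup_le_sup_left hle _))

theorem momRank_eq_forall_of_generic_general (hrs : r ≤ s) (hsT : s ≤ T) (hL : momPSD L T)
    (hrank : momRank L s = momRank L r)
    (hL' : ∀ (α : Fin n →₀ ℕ) (g : MP n), mdeg α ≤ s → g ∈ momKer L T →
      L' (monomial α 1 * g) = 0) :
    momRank L' s = momRank L' r := by
  refine momRank_eq_of_momKer_subset hrs (fun p hp => ⟨hp.1, fun β hβ => ?_⟩) hrank
  rw [mul_comm]
  exact hL' β p hβ (momKer_subset_of_momPSD hsT hL hp)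

end MomentMatrix

/-- Let `1 ≤ s ≤ ⌊t/2⌋`, `G_t = H_t ∪ W_t`.  If
`rank M_s(L*) = rank M_{s−1}(L*)` holds for some generic `L* ∈ K_{t,⪰}`, then
`rank M_s(L) = rank M_{s−1}(L)` for every linear functional `L` vanishing on `G_t`. -/
theorem momRank_eq_forall_of_generic {n m s t : ℕ} (h : Fin m → MP n)
    (hs1 : 1 ≤ s) (hst : s ≤ t / 2)
    (Lstar : Module.Dual ℝ (MP n)) (hgen : Generic h t Lstar)
    (hrank : momRank Lstar s = momRank Lstar (s - 1)) :
    ∀ L : Module.Dual ℝ (MP n), (∀ g ∈ Hset h t ∪ Wset h t Lstar, L g = 0) →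
      momRank L s = momRank L (s - 1) := fun _ hL =>
  momRank_eq_forall_of_generic_general (Nat.sub_le s 1) hst hgen.1.2 hrank fun α g hα hg =>
    hL _ (Or.inr ⟨α, g, hα.trans hst, hg, rfl⟩)
end
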